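/- arXiv:1210.8303 — 2 statements merged into one kernel-verified Lean document; each statement's English description precedes it below -/
import Mathlib

section
/- Every flow graph G has a pair of strongly independent spanning trees rooted at s. -/
variable {V : Type*}

/-- `IsWalk A u v p`: `p` is a path from `u` to `v` in the digraph with arc
relation `A`, listing all of its vertices in order. -/
def IsWalk (A : V → V → Prop) (u v : V) (p : List V) : Prop :=
  p.Chain' A ∧ p.head? = some u ∧ p.getLast? = some v

/-- A flow graph: a directed graph with arc relation `A` and start vertex `s`
such that every vertex is reachable from `s` and no arc enters `s`. -/
structure FlowGraph (V : Type*) where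
  A : V → V → Prop
  s : V
  reach : ∀ v : V, ∃ p : List V, IsWalk A s v p
  no_enter : ∀ v : V, ¬ A v s

/-- `DomOn A s v w`: `v` lies on every path from `s` to `w` in the digraph with
arc relation `A`. -/
def DomOn (A : V → V → Prop) (s v w : V) : Prop :=
  ∀ p : List V, IsWalk A s w p → v ∈ p

/-- `v` dominates `w` in the flow graph `G`. -/
def FlowGraph.Dom (G : FlowGraph V) (v w : V) : Prop :=
  DomOn G.A G.s v w

/-- A rooted tree on vertex set `V`, given by a parent function: the root is a
fixed point of the parent function, and iterating the parent function from any
vertex eventually reaches the root. -/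
structure ParentTree (V : Type*) where
  parent : V → V
  root : V
  parent_root : parent root = root
  reaches_root : ∀ v : V, ∃ n : ℕ, parent^[n] v = root

/-- `T.Anc x y`: `x` is an ancestor of `y` in the rooted tree `T` (every vertex
is an ancestor of itself). -/
def ParentTree.Anc (T : ParentTree V) (x y : V) : Prop :=
  ∃ n : ℕ, T.parent^[n] y = x

/-- `T` has the parent property with respect to `G`: for every arc `(v, w)`,
the parent of `w` is an ancestor of `v` in `T`. -/
def ParentProperty (G : FlowGraph V) (T : ParentTree V) : Prop :=
  ∀ v w : V, G.A v w → T.Anc (T.parent w) v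

/-- The sibling property with respect to an arbitrary arc relation `A` with
start vertex `s`: no non-root vertex dominates a distinct vertex with the same
parent. -/
def SiblingPropertyOn (A : V → V → Prop) (s : V) (T : ParentTree V) : Prop :=
  ∀ v w : V, v ≠ T.root → w ≠ T.root → v ≠ w → T.parent v = T.parent w →
    ¬ DomOn A s v w

/-- `T` has the sibling property with respect to the flow graph `G`. -/
def SiblingProperty (G : FlowGraph V) (T : ParentTree V) : Prop :=
  SiblingPropertyOn G.A G.s T

/-- `T` is the dominator tree of the digraph with arc relation `A` and start
vertex `s`: `T` is rooted at `s`, and the parent of every vertex `v ≠ s` is its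
immediate dominator, i.e. a strict dominator of `v` that is dominated by every
strict dominator of `v`. -/
def IsDomTreeOn (A : V → V → Prop) (s : V) (T : ParentTree V) : Prop :=
  T.root = s ∧ ∀ v : V, v ≠ s →
    DomOn A s (T.parent v) v ∧ T.parent v ≠ v ∧
    ∀ u : V, DomOn A s u v → u ≠ v → DomOn A s u (T.parent v)

/-- `T` is the dominator tree of the flow graph `G`. -/
def IsDomTree (G : FlowGraph V) (T : ParentTree V) : Prop :=
  IsDomTreeOn G.A G.s T

/-- `ord` is (the numbering of) a preorder of the rooted tree `T`: an injective
numbering of the vertices such that for every vertex `v` the descendants of `v`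
are ordered consecutively, with `v` first. -/
def IsTreePreorder (T : ParentTree V) (ord : V → ℕ) : Prop :=
  Function.Injective ord ∧
  (∀ v x : V, T.Anc v x → ord v ≤ ord x) ∧
  (∀ v x y z : V, T.Anc v x → T.Anc v z → ord x ≤ ord y → ord y ≤ ord z →
    T.Anc v y)

/-- A preorder `ord` of `T` is low-high on the digraph with arc relation `A`
and start vertex `s`: for every `v ≠ s`, either `(t(v), v)` is an arc, or there
are arcs `(u, v)` and `(w, v)` with `u < v < w` in the order and `w` not a
descendant of `v` in `T`. -/
def LowHighOn (A : V → V → Prop) (s : V) (T : ParentTree V) (ord : V → ℕ) :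
    Prop :=
  IsTreePreorder T ord ∧
  ∀ v : V, v ≠ s → (A (T.parent v) v ∨
    ∃ u w : V, A u v ∧ A w v ∧ ord u < ord v ∧ ord v < ord w ∧ ¬ T.Anc v w)

/-- A low-high order of `T` on the flow graph `G`. -/
def LowHigh (G : FlowGraph V) (T : ParentTree V) (ord : V → ℕ) : Prop :=
  LowHighOn G.A G.s T ord

/-- `B` is (the arc relation of) a spanning tree of `G` rooted at `s`: a
subgraph of `G` in which no arc enters `s`, every vertex other than `s` has
exactly one entering arc, and every vertex is reachable from `s`. -/
def IsSpanningTree (G : FlowGraph V) (B : V → V → Prop) : Prop :=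
  (∀ u v : V, B u v → G.A u v) ∧
  (∀ v : V, ¬ B v G.s) ∧
  (∀ v : V, v ≠ G.s → ∃! u : V, B u v) ∧
  (∀ v : V, ∃ p : List V, IsWalk B G.s v p)

/-- Spanning trees `B` and `R` of `G` rooted at `s` are independent: for every
vertex `v`, the paths from `s` to `v` in `B` and in `R` have in common only
dominators of `v`. -/
def Independent (G : FlowGraph V) (B R : V → V → Prop) : Prop :=
  ∀ v : V, ∀ p q : List V, IsWalk B G.s v p → IsWalk R G.s v q →
    ∀ x : V, x ∈ p → x ∈ q → G.Dom x v

/-- Spanning trees `B` and `R` of `G` rooted at `s` are strongly independent: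
for every pair of vertices `v`, `w`, either the path from `s` to `v` in `B` and
the path from `s` to `w` in `R` have in common only common dominators of `v`
and `w`, or the same holds with the roles of `B` and `R` exchanged. -/
def StronglyIndependent (G : FlowGraph V) (B R : V → V → Prop) : Prop :=
  ∀ v w : V,
    (∀ p q : List V, IsWalk B G.s v p → IsWalk R G.s w q →
      ∀ x : V, x ∈ p → x ∈ q → G.Dom x v ∧ G.Dom x w) ∨
    (∀ p q : List V, IsWalk R G.s v p → IsWalk B G.s w q →
      ∀ x : V, x ∈ p → x ∈ q → G.Dom x v ∧ G.Dom x w)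

/-- `IsDerivedArcOf G T v b a`: `(a, b)` is the derived arc of the arc `(v, b)`
of `G` with respect to `T`: `b` is not an ancestor of `v` in `T`, and `a = v`
if `v` is the parent of `b`, while otherwise `a` is the sibling of `b` in `T`
that is an ancestor of `v`. -/
def IsDerivedArcOf (G : FlowGraph V) (T : ParentTree V) (v b a : V) : Prop :=
  G.A v b ∧ ¬ T.Anc b v ∧
    ((v = T.parent b ∧ a = v) ∨
     (v ≠ T.parent b ∧ a ≠ T.root ∧ T.parent a = T.parent b ∧ T.Anc a v))

/-- The arc relation of the derived graph of `G` with respect to `T`. -/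
def DerivedArc (G : FlowGraph V) (T : ParentTree V) (a b : V) : Prop :=
  ∃ v : V, IsDerivedArcOf G T v b a

/-- `S` is the vertex set of a strongly connected subgraph of the digraph with
arc relation `A`. -/
def StronglyConnectedSet (A : V → V → Prop) (S : Set V) : Prop :=
  S.Nonempty ∧ ∀ u ∈ S, ∀ v ∈ S, ∃ p : List V,
    IsWalk A u v p ∧ ∀ x ∈ p, x ∈ S

/-- `G` is reducible: every strongly connected subgraph has a single entry
vertex, i.e. a vertex of the subgraph contained in every path from `s` to a
vertex of the subgraph. -/
def Reducible (G : FlowGraph V) : Prop :=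
  ∀ S : Set V, StronglyConnectedSet G.A S →
    ∃ v ∈ S, ∀ u ∈ S, ∀ p : List V, IsWalk G.A G.s u p → v ∈ p

/-- A digraph is acyclic if it has no cycle (a path from a vertex to itself
with at least one arc). -/
def Acyclic (A : V → V → Prop) : Prop :=
  ¬ ∃ (v : V) (p : List V), IsWalk A v v p ∧ 2 ≤ p.length

/-- `IsHighWalk A ν u v p`: `p` is a high path from `u` to `v`: a path all of
whose vertices other than `u` and `v` are greater (in the numbering `ν`) than
both `u` and `v`. -/
def IsHighWalk (A : V → V → Prop) (ν : V → ℕ) (u v : V) (p : List V) : Prop :=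
  IsWalk A u v p ∧ ∀ x ∈ p, x ≠ u → x ≠ v → ν u < ν x ∧ ν v < ν x


/-- Reachability from the initial vertices `I` using only vertices satisfying `P`. -/
inductive Rc (I P : V → Prop) (A : V → V → Prop) : V → Prop
  | base (y : V) : I y → P y → Rc I P A y
  | step (u y : V) : Rc I P A u → A u y → P y → Rc I P A y

theorem Rc.prop {I P : V → Prop} {A : V → V → Prop} {y : V} (h : Rc I P A y) : P y := by
  cases h <;> assumption

theorem Rc.mono {I P Q : V → Prop} {A A' : V → V → Prop} (hP : ∀ y, P y → Q y)
    (hA : ∀ u v, A u v → A' u v) {y : V} (h : Rc I P A y) : Rc I Q A' y := by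
  induction h with
  | base y h1 h2 => exact .base y h1 (hP _ h2)
  | step u y _ h1 h2 ih => exact .step u y ih (hA _ _ h1) (hP _ h2)

/-- The low-high order in the flat case. -/
theorem flat_order [Fintype V] (n : ℕ) : ∀ (X : Finset V), X.card = n →
    ∀ (S : V → Prop) (A : V → V → Prop),
    (∀ y ∈ X, Rc S (fun z => z ∈ X) A y) →
    (∀ x ∈ X, ∀ y ∈ X, y ≠ x → Rc S (fun z => z ∈ X ∧ z ≠ x) A y) →
    ∃ f : V → ℕ, (∀ x ∈ X, ∀ y ∈ X, f x = f y → x = y) ∧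
      ∀ x ∈ X, S x ∨ ∃ u ∈ X, ∃ w ∈ X, A u x ∧ A w x ∧ f u < f x ∧ f x < f w := by
  classical
  induction n with
  | zero =>
    intro X hX S A _ _
    rw [Finset.card_eq_zero] at hX
    subst hX
    exact ⟨fun _ => 0, by simp, by simp⟩
  | succ n ih =>
    intro X hX S A h1 h2
    by_cases hall : ∀ x ∈ X, S x
    · refine ⟨fun x => (Fintype.equivFin V x : ℕ), ?_, fun x hx => Or.inl (hall x hx)⟩
      intro x _ y _ h
      exact (Fintype.equivFin V).injective (Fin.ext h)
    push Not at hall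
    obtain ⟨y0, hy0, hSy0⟩ := hall
    -- an arc from an `S` vertex to a non-`S` vertex
    have key : ∀ z, Rc S (fun z => z ∈ X) A z →
        S z ∨ ∃ v ∈ X, ∃ w ∈ X, S v ∧ ¬ S w ∧ A v w := by
      intro z hz
      induction hz with
      | base y h _ => exact Or.inl h
      | step u y hu hA hy ihu =>
        rcases ihu with h | h
        · by_cases hSy : S y
          · exact Or.inl hSy
          · exact Or.inr ⟨u, hu.prop, y, hy, h, hSy, hA⟩
        · exact Or.inr h
    obtain ⟨v, hvX, w0, hw0X, hSv, hSw0, hvw0⟩ := (key y0 (h1 y0 hy0)).resolve_left hSy0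
    let Y : V → Finset V := fun w => X.filter
      (fun y => y ≠ v ∧ y ≠ w ∧ ¬ Rc S (fun z => z ∈ X ∧ z ≠ v ∧ z ≠ w) A y)
    obtain ⟨w, hw, hmin⟩ := Finset.exists_min_image
      (X.filter (fun w => A v w ∧ ¬ S w)) (fun w => (Y w).card)
      ⟨w0, by simp [hw0X, hvw0, hSw0]⟩
    simp only [Finset.mem_filter] at hw
    obtain ⟨hwX, hvw, hSw⟩ := hw
    have hvnw : v ≠ w := by rintro rfl; exact hSw hSv
    have hYe : ∀ y ∈ X, y ≠ v → y ≠ w → Rc S (fun z => z ∈ X ∧ z ≠ v ∧ z ≠ w) A y := by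
      by_contra hcon
      push Not at hcon
      obtain ⟨y, hyX, hyv, hyw, hy⟩ := hcon
      have c1 : ∀ z, Rc S (fun z => z ∈ X ∧ z ≠ w) A z →
          Rc S (fun z => z ∈ X ∧ z ≠ v ∧ z ≠ w) A z ∨ z = v ∨ ∃ w' ∈ Y w, A v w' := by
        intro z hz
        induction hz with
        | base z hS hP =>
          by_cases hzv : z = v
          · exact Or.inr (Or.inl hzv)
          · exact Or.inl (.base z hS ⟨hP.1, hzv, hP.2⟩)
        | step u z hu hA hP ihu =>
          by_cases hzv : z = v
          · exact Or.inr (Or.inl hzv)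
          rcases ihu with h | h | h
          · exact Or.inl (.step u z h hA ⟨hP.1, hzv, hP.2⟩)
          · by_cases hzY : Rc S (fun z => z ∈ X ∧ z ≠ v ∧ z ≠ w) A z
            · exact Or.inl hzY
            · refine Or.inr (Or.inr ⟨z, ?_, h ▸ hA⟩)
              simp only [Y, Finset.mem_filter]
              exact ⟨hP.1, hzv, hP.2, hzY⟩
          · exact Or.inr (Or.inr h)
      obtain ⟨w', hw'Y, hvw'⟩ := ((c1 y (h2 w hwX y hyX hyw)).resolve_left hy).resolve_left hyv
      have hw'Y0 := hw'Y
      simp only [Y, Finset.mem_filter] at hw'Y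
      obtain ⟨hw'X, hw'v, hw'w, hw'R⟩ := hw'Y
      have hSw' : ¬ S w' := fun h => hw'R (.base w' h ⟨hw'X, hw'v, hw'w⟩)
      have c2 : ∀ z, Rc S (fun z => z ∈ X ∧ z ≠ v ∧ z ≠ w) A z →
          Rc S (fun z => z ∈ X ∧ z ≠ v ∧ z ≠ w') A z := by
        intro z hz
        induction hz with
        | base z hS hP =>
          exact .base z hS ⟨hP.1, hP.2.1, fun h => hSw' (h ▸ hS)⟩
        | step u z hu hA hP ihu =>
          refine .step u z ihu hA ⟨hP.1, hP.2.1, fun h => ?_⟩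
          subst h
          exact hw'R (.step u z hu hA hP)
      have c3 : ∀ z, Rc S (fun z => z ∈ X ∧ z ≠ v) A z →
          Rc S (fun z => z ∈ X ∧ z ≠ v ∧ z ≠ w) A z ∨
          Rc S (fun z => z ∈ X ∧ z ≠ v ∧ z ≠ w') A w := by
        intro z hz
        induction hz with
        | base z hS hP =>
          exact Or.inl (.base z hS ⟨hP.1, hP.2, fun h => hSw (h ▸ hS)⟩)
        | step u z hu hA hP ihu =>
          rcases ihu with h | h
          · by_cases hzw : z = w
            · subst hzw
              exact Or.inr (.step u z (c2 u h) hA ⟨hP.1, hP.2, fun h => hw'w h.symm⟩)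
            · exact Or.inl (.step u z h hA ⟨hP.1, hP.2, hzw⟩)
          · exact Or.inr h
      have hRw : Rc S (fun z => z ∈ X ∧ z ≠ v ∧ z ≠ w') A w := by
        rcases c3 w (h2 v hvX w hwX hvnw.symm) with h | h
        · exact absurd rfl h.prop.2.2
        · exact h
      have hss : Y w' ⊂ Y w := by
        rw [Finset.ssubset_iff_of_subset]
        · refine ⟨w', hw'Y0, ?_⟩
          simp [Y]
        · intro y' hy'
          simp only [Y, Finset.mem_filter] at hy' ⊢
          obtain ⟨a, b, c, d⟩ := hy'
          refine ⟨a, b, ?_, fun h => d (c2 _ h)⟩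
          rintro rfl
          exact d hRw
      have := hmin w' (by simp [hw'X, hvw', hSw'])
      exact absurd (Finset.card_lt_card hss) (by omega)
    -- another in-neighbour of `w`
    have c4 : ∀ z, Rc S (fun z => z ∈ X ∧ z ≠ v) A z → z = w →
        ∃ u ∈ X, u ≠ v ∧ u ≠ w ∧ A u w := by
      intro z hz
      induction hz with
      | base z hS hP => rintro rfl; exact absurd hS hSw
      | step u z hu hA hP ihu =>
        rintro rfl
        by_cases huw : u = z
        · exact ihu huw
        · exact ⟨u, hu.prop.1, hu.prop.2, huw, hA⟩
    obtain ⟨u, huX, huv, huw, hAuw⟩ := c4 w (h2 v hvX w hwX hvnw.symm) rfl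
    -- contract
    have hvX' : v ∈ X.erase w := Finset.mem_erase.2 ⟨hvnw, hvX⟩
    obtain ⟨f, finj, hf⟩ := ih (X.erase w) (by rw [Finset.card_erase_of_mem hwX]; omega) S
      (fun a b => A a b ∨ (a = v ∧ A w b))
      (by
        intro y hy
        rw [Finset.mem_erase] at hy
        by_cases hyv : y = v
        · subst hyv; exact .base _ hSv hvX'
        · exact (hYe y hy.2 hyv hy.1).mono
            (fun z hz => Finset.mem_erase.2 ⟨hz.2.2, hz.1⟩) (fun _ _ => Or.inl))
      (by
        intro x hx y hy hyx
        rw [Finset.mem_erase] at hx hy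
        by_cases hxv : x = v
        · subst hxv
          exact (hYe y hy.2 hyx hy.1).mono
            (fun z hz => ⟨Finset.mem_erase.2 ⟨hz.2.2, hz.1⟩, hz.2.1⟩) (fun _ _ => Or.inl)
        · have c5 : ∀ z, Rc S (fun z => z ∈ X ∧ z ≠ x) A z → z ≠ w →
              Rc S (fun z => z ∈ X.erase w ∧ z ≠ x)
                (fun a b => A a b ∨ (a = v ∧ A w b)) z := by
            intro z hz
            induction hz with
            | base z hS hP =>
              intro hzw
              exact .base z hS ⟨Finset.mem_erase.2 ⟨hzw, hP.1⟩, hP.2⟩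
            | step u z hu hA hP ihu =>
              intro hzw
              by_cases huw : u = w
              · subst huw
                exact .step v z (.base v hSv ⟨hvX', fun h => hxv h.symm⟩) (Or.inr ⟨rfl, hA⟩)
                  ⟨Finset.mem_erase.2 ⟨hzw, hP.1⟩, hP.2⟩
              · exact .step u z (ihu huw) (Or.inl hA)
                  ⟨Finset.mem_erase.2 ⟨hzw, hP.1⟩, hP.2⟩
          exact c5 y (h2 x hx.2 y hy.2 hyx) hy.1)
    have huX' : u ∈ X.erase w := Finset.mem_erase.2 ⟨huw, huX⟩
    have hfuv : f u ≠ f v := fun h => huv (finj u huX' v hvX' h)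
    obtain ⟨k, hk⟩ : ∃ k, k = if f v < f u then 3 * f v + 2 else 3 * f v := ⟨_, rfl⟩
    have hk2 : 3 * f v ≤ k ∧ k ≤ 3 * f v + 2 ∧ k ≠ 3 * f v + 1 := by
      split_ifs at hk <;> omega
    refine ⟨fun x => if x = w then k else 3 * f x + 1, ?_, ?_⟩
    · intro x hx y hy hxy
      by_cases hxw : x = w <;> by_cases hyw : y = w
      · rw [hxw, hyw]
      · simp only [hxw, hyw, if_true, if_false] at hxy
        omega
      · simp only [hxw, hyw, if_true, if_false] at hxy
        omega
      · simp only [hxw, hyw, if_false] at hxy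
        exact finj x (Finset.mem_erase.2 ⟨hxw, hx⟩) y (Finset.mem_erase.2 ⟨hyw, hy⟩) (by omega)
    · intro x hx
      by_cases hxw : x = w
      · subst hxw
        right
        by_cases hlt : f v < f u
        · refine ⟨v, hvX, u, huX, hvw, hAuw, ?_, ?_⟩ <;>
            simp only [hvnw, huw, if_true, if_false] <;> simp only [hlt, if_true] at hk <;> omega
        · refine ⟨u, huX, v, hvX, hAuw, hvw, ?_, ?_⟩ <;>
            simp only [hvnw, huw, if_true, if_false] <;> simp only [hlt, if_false] at hk <;> omega
      · rcases hf x (Finset.mem_erase.2 ⟨hxw, hx⟩) with h | ⟨a, ha, b, hb, hA, hB, hl, hh⟩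
        · exact Or.inl h
        · right
          rw [Finset.mem_erase] at ha hb
          have e1 : ∃ a' ∈ X, A a' x ∧ (if a' = w then k else 3 * f a' + 1) < 3 * f x + 1 := by
            rcases hA with h | ⟨rfl, h⟩
            · exact ⟨a, ha.2, h, by rw [if_neg ha.1]; omega⟩
            · exact ⟨w, hwX, h, by rw [if_pos rfl]; omega⟩
          have e2 : ∃ a' ∈ X, A a' x ∧ 3 * f x + 1 < (if a' = w then k else 3 * f a' + 1) := by
            rcases hB with h | ⟨rfl, h⟩
            · exact ⟨b, hb.2, h, by rw [if_neg hb.1]; omega⟩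
            · exact ⟨w, hwX, h, by rw [if_pos rfl]; omega⟩
          obtain ⟨a', q1, q2, q3⟩ := e1
          obtain ⟨b', q4, q5, q6⟩ := e2
          refine ⟨a', q1, b', q4, q2, q5, ?_, ?_⟩
          · simp only [hxw, if_false]; exact q3
          · simp only [hxw, if_false]; exact q6

/-! Walks. -/

theorem walk_ind {A : V → V → Prop} {s : V} (motive : V → List V → Prop)
    (base : motive s [s])
    (step : ∀ u v q, IsWalk A s u q → motive u q → A u v → motive v (q ++ [v])) :
    ∀ (p : List V) (v : V), IsWalk A s v p → motive v p := by
  intro p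
  induction p using List.reverseRecOn with
  | nil => intro v h; simp [IsWalk] at h
  | append_singleton q x ih =>
    rintro v ⟨h1, h2, h3⟩
    simp only [List.getLast?_append, List.getLast?_singleton, Option.some_or,
      Option.some.injEq] at h3
    subst h3
    rcases List.eq_nil_or_concat q with rfl | ⟨q', u, rfl⟩
    · simp at h2; subst h2; exact base
    · have h1' : List.IsChain A ((q' ++ [u]) ++ [x]) := by rw [List.concat_eq_append] at h1; exact h1
      rw [List.isChain_append] at h1'
      have hw : IsWalk A s u (q' ++ [u]) := by
        refine ⟨h1'.1, ?_, by simp⟩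
        cases q' <;> simpa using h2
      have := step u x (q' ++ [u]) hw (by rw [← List.concat_eq_append]; exact ih u (by rw [List.concat_eq_append]; exact hw)) (h1'.2.2 u (by simp) x (by simp))
      simpa using this

theorem walk_snoc {A : V → V → Prop} {s u v : V} {p : List V} (h : IsWalk A s u p) (ha : A u v) :
    IsWalk A s v (p ++ [v]) := by
  obtain ⟨h1, h2, h3⟩ := h
  refine ⟨?_, ?_, by simp⟩
  · refine List.IsChain.append h1 (by simp) ?_
    intro x hx y hy
    rw [h3] at hx
    simp at hx hy
    subst hx; subst hy; exact ha
  · cases p with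
    | nil => simp at h2
    | cons a t => simpa using h2

theorem domOn_iff {A : V → V → Prop} {s x z : V} :
    DomOn A s x z ↔ ¬ Rc (fun y => y = s) (fun y => y ≠ x) A z := by
  constructor
  · intro h hr
    have : ∃ p, IsWalk A s z p ∧ x ∉ p := by
      clear h
      induction hr with
      | base y h1 h2 =>
        subst h1
        exact ⟨[y], ⟨by simp [List.Chain'], by simp, by simp⟩, by simpa using h2.symm⟩
      | step u y _ hA hP ih =>
        obtain ⟨p, hp, hx⟩ := ih
        exact ⟨p ++ [y], walk_snoc hp hA, by simp [hx, hP.symm]⟩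
    obtain ⟨p, hp, hx⟩ := this
    exact hx (h p hp)
  · intro h p hp
    by_contra hx
    apply h
    clear h
    revert hx
    refine walk_ind (fun z p => x ∉ p → Rc (fun y => y = s) (fun y => y ≠ x) A z) ?_ ?_ p z hp
    · intro hx; exact .base s rfl (by simpa [eq_comm] using hx)
    · intro u v q _ ih hA hx
      simp at hx
      exact .step u v (ih hx.1) hA (fun h => hx.2 h.symm)

/-! Lexicographic order on keys. -/

theorem list_nil_le (c : List ℕ) : ([] : List ℕ) ≤ c := not_lt.1 (List.not_lt_nil c)

theorem list_cons_le (x y : ℕ) (a b : List ℕ) : x :: a ≤ y :: b ↔ x < y ∨ x = y ∧ a ≤ b := by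
  have h1 : x :: a ≤ y :: b ↔ ¬ (y :: b < x :: a) := not_lt.symm
  have h2 : a ≤ b ↔ ¬ (b < a) := not_lt.symm
  have h3 : y :: b < x :: a ↔ y < x ∨ y = x ∧ b < a := List.cons_lt_cons_iff
  rw [h1, h2, h3]
  rcases lt_trichotomy x y with h | h | h
  · simp [h, h.le, h.ne, h.ne', h.not_gt]
  · subst h; simp
  · simp [h, h.le, h.ne, h.ne', h.not_gt]

theorem prefix_le : ∀ a c : List ℕ, a <+: c → a ≤ c
  | [], c, _ => list_nil_le c
  | x :: a, c, h => by
    obtain ⟨t, rfl⟩ := h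
    rw [List.cons_append, list_cons_le]
    exact Or.inr ⟨rfl, prefix_le a _ ⟨t, rfl⟩⟩

theorem prefix_mid : ∀ a b c : List ℕ, a <+: c → a ≤ b → b ≤ c → a <+: b
  | [], b, c, _, _, _ => by simp
  | x :: a, [], c, _, h, _ => absurd (List.nil_lt_cons x a) (not_lt.2 h)
  | x :: a, y :: b, c, h, h1, h2 => by
    obtain ⟨t, rfl⟩ := h
    rw [List.cons_append, list_cons_le] at h2
    rw [list_cons_le] at h1
    have hxy : x = y := by omega
    subst hxy
    have h1' : a ≤ b := by rcases h1 with h | h; omega; exact h.2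
    have h2' : b ≤ a ++ t := by rcases h2 with h | h; omega; exact h.2
    obtain ⟨r, hr⟩ := prefix_mid a b (a ++ t) ⟨t, rfl⟩ h1' h2'
    exact ⟨r, by rw [List.cons_append, hr]⟩

theorem lex_lt (p : List ℕ) (i j : ℕ) (l m : List ℕ) (h : i < j) :
    p ++ i :: l < p ++ j :: m := by
  induction p with
  | nil => simp only [List.nil_append]; rw [List.cons_lt_cons_iff]; exact Or.inl h
  | cons a p ih =>
    simp only [List.cons_append]; rw [List.cons_lt_cons_iff]; exact Or.inr ⟨rfl, ih⟩

/-! Basic facts on dominators. -/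

namespace FlowGraph

/-- Reachability from the start vertex inside `P`. -/
abbrev Av (G : FlowGraph V) (P : V → Prop) (z : V) : Prop := Rc (fun y => y = G.s) P G.A z

theorem dom_iff (G : FlowGraph V) {x z : V} : G.Dom x z ↔ ¬ G.Av (fun y => y ≠ x) z := domOn_iff

theorem not_dom_iff (G : FlowGraph V) {x z : V} : ¬ G.Dom x z ↔ G.Av (fun y => y ≠ x) z := by
  rw [dom_iff, not_not]

theorem av_true (G : FlowGraph V) (z : V) : G.Av (fun _ => True) z := by
  obtain ⟨p, hp⟩ := G.reach z
  refine walk_ind (fun z _ => G.Av (fun _ => True) z) ?_ ?_ p z hp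
  · exact .base _ rfl trivial
  · intro u v q _ ih hA
    exact .step u v ih hA trivial

theorem dom_refl (G : FlowGraph V) (x : V) : G.Dom x x := by
  rw [dom_iff]; intro h; exact h.prop rfl

theorem root_dom (G : FlowGraph V) (x : V) : G.Dom G.s x := by
  rw [dom_iff]; intro h
  induction h with
  | base y h1 h2 => exact h2 h1
  | step _ _ _ _ _ ih => exact ih

theorem dom_root (G : FlowGraph V) {x : V} (h : G.Dom x G.s) : x = G.s := by
  by_contra hx
  rw [dom_iff] at h
  exact h (.base _ rfl (fun h => hx h.symm))

theorem dom_trans (G : FlowGraph V) {x y z : V} (h1 : G.Dom x y) (h2 : G.Dom y z) :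
    G.Dom x z := by
  rw [dom_iff] at *
  intro h
  apply h2
  clear h2
  induction h with
  | base z hz hP => exact .base z hz (fun e => h1 (e ▸ .base z hz hP))
  | step u z hu hA hP ih => exact .step u z ih hA (fun e => h1 (e ▸ .step u z hu hA hP))

theorem dom_antisymm (G : FlowGraph V) {x y : V} (h1 : G.Dom x y) (h2 : G.Dom y x) : x = y := by
  by_contra hne
  have key : ∀ z, G.Av (fun _ => True) z → G.Av (fun a => a ≠ x ∧ a ≠ y) z := by
    intro z hz
    induction hz with
    | base z hz _ =>
      refine .base z hz ⟨?_, ?_⟩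
      · rintro rfl; rw [hz] at h2 hne; exact hne (G.dom_root h2).symm
      · rintro rfl; rw [hz] at h1 hne; exact hne (G.dom_root h1)
    | step u z _ hA _ ih =>
      refine .step u z ih hA ⟨?_, ?_⟩
      · rintro rfl
        rw [dom_iff] at h2
        exact h2 (.step u z (ih.mono (fun _ h => h.2) (fun _ _ h => h)) hA hne)
      · rintro rfl
        rw [dom_iff] at h1
        exact h1 (.step u z (ih.mono (fun _ h => h.1) (fun _ _ h => h)) hA (Ne.symm hne))
  exact (key x (G.av_true x)).prop.1 rfl

theorem dom_chain (G : FlowGraph V) {x y v : V} (h1 : G.Dom x v) (h2 : G.Dom y v) :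
    G.Dom x y ∨ G.Dom y x := by
  by_contra hcon
  push Not at hcon
  obtain ⟨n1, n2⟩ := hcon
  have key : ∀ z, G.Av (fun _ => True) z →
      G.Av (fun a => a ≠ x) z ∨ G.Av (fun a => a ≠ y) z := by
    intro z hz
    induction hz with
    | base z hz _ =>
      left
      refine .base z hz ?_
      rintro rfl; rw [hz] at n1; exact n1 (G.root_dom _)
    | step u z _ hA _ ih =>
      by_cases hzx : z = x
      · rw [hzx]; exact Or.inr (G.not_dom_iff.1 n2)
      by_cases hzy : z = y
      · rw [hzy]; exact Or.inl (G.not_dom_iff.1 n1)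
      exact ih.imp (fun h => .step u z h hA hzx) (fun h => .step u z h hA hzy)
  rcases key v (G.av_true v) with h | h
  · exact G.dom_iff.1 h1 h
  · exact G.dom_iff.1 h2 h

theorem dom_arc (G : FlowGraph V) {x u v : V} (hA : G.A u v) (h : G.Dom x v) (hx : x ≠ v) :
    G.Dom x u := by
  rw [dom_iff] at *
  exact fun hu => h (.step u v hu hA hx.symm)

/-- Existence of immediate dominators, with a depth function. -/
theorem exists_idom [Fintype V] (G : FlowGraph V) : ∃ (t : V → V) (dep : V → ℕ),
    ∀ v, v ≠ G.s → G.Dom (t v) v ∧ t v ≠ v ∧ (∀ x, G.Dom x v → x ≠ v → G.Dom x (t v)) ∧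
      dep (t v) < dep v := by
  classical
  let ds : V → Finset V := fun v => Finset.univ.filter (fun x => G.Dom x v)
  have hex : ∀ v, ∃ t, v ≠ G.s → G.Dom t v ∧ t ≠ v ∧ (∀ x, G.Dom x v → x ≠ v → G.Dom x t) := by
    intro v
    by_cases hv : v = G.s
    · exact ⟨v, fun h => absurd hv h⟩
    obtain ⟨t, ht, hmax⟩ := Finset.exists_max_image ((ds v).erase v) (fun x => (ds x).card)
      ⟨G.s, by simp [ds, Ne.symm hv, G.root_dom]⟩
    simp only [ds, Finset.mem_erase, Finset.mem_filter, Finset.mem_univ, true_and] at ht hmax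
    refine ⟨t, fun _ => ⟨ht.2, ht.1, fun x hx hxv => ?_⟩⟩
    rcases G.dom_chain hx ht.2 with h | h
    · exact h
    · have hsub : ds t ⊆ ds x := by
        intro a ha
        simp only [ds, Finset.mem_filter, Finset.mem_univ, true_and] at ha ⊢
        exact G.dom_trans ha h
      have heq := Finset.eq_of_subset_of_card_le hsub (hmax x ⟨hxv, hx⟩)
      have : x ∈ ds t := by rw [heq]; simp [ds, G.dom_refl]
      simpa [ds] using this
  choose t ht using hex
  refine ⟨t, fun v => (ds v).card, fun v hv => ⟨(ht v hv).1, (ht v hv).2.1, (ht v hv).2.2, ?_⟩⟩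
  apply Finset.card_lt_card
  rw [Finset.ssubset_iff_of_subset]
  · refine ⟨v, by simp [ds, G.dom_refl], ?_⟩
    simp only [ds, Finset.mem_filter, Finset.mem_univ, true_and]
    exact fun h => (ht v hv).2.1 (G.dom_antisymm (ht v hv).1 h)
  · intro a ha
    simp only [ds, Finset.mem_filter, Finset.mem_univ, true_and] at ha ⊢
    exact G.dom_trans ha (ht v hv).1

theorem exists_key (s : V) (t : V → V) (dep : V → ℕ) (h : ∀ v, v ≠ s → dep (t v) < dep v)
    (F : V → ℕ) : ∃ key : V → List ℕ, key s = [] ∧ ∀ v, v ≠ s → key v = key (t v) ++ [F v] := by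
  classical
  let K : ∀ x, (∀ y, dep y < dep x → List ℕ) → List ℕ := fun x rec =>
    if hx : x = s then [] else rec (t x) (h x hx) ++ [F x]
  refine ⟨(measure dep).wf.fix K, ?_, ?_⟩
  · rw [WellFounded.fix_eq]; simp [K]
  · intro v hv
    rw [WellFounded.fix_eq]
    simp [K, hv]

/-- A linear order (via keys) which is low-high for dominance. -/
theorem exists_lowhigh [Fintype V] (G : FlowGraph V) :
    ∃ (key : V → List ℕ) (b r : V → V),
      (∀ x y, key x = key y → x = y) ∧
      (∀ x y, G.Dom x y ↔ key x <+: key y) ∧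
      (∀ v, v ≠ G.s → G.A (b v) v ∧ key (b v) < key v) ∧
      (∀ v, v ≠ G.s → G.A (r v) v ∧
        ((G.Dom (r v) v ∧ r v ≠ v) ∨ (key v < key (r v) ∧ ¬ G.Dom v (r v)))) := by
  classical
  obtain ⟨t, dep, ht⟩ := G.exists_idom
  -- children
  have child : ∀ n d u, dep u = n → G.Dom d u → d ≠ u → ∃ c, c ≠ G.s ∧ t c = d ∧ G.Dom c u := by
    intro n
    induction n using Nat.strong_induction_on with
    | _ n ih =>
      intro d u hn hd hne
      have hu : u ≠ G.s := by
        rintro rfl; exact hne (G.dom_root hd)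
      obtain ⟨a1, a2, a3, a4⟩ := ht u hu
      by_cases hdt : d = t u
      · exact ⟨u, hu, hdt.symm, G.dom_refl u⟩
      · obtain ⟨c, c1, c2, c3⟩ := ih (dep (t u)) (hn ▸ a4) d (t u) rfl (a3 d hd hne) hdt
        exact ⟨c, c1, c2, G.dom_trans c3 a1⟩
  let C : V → Finset V := fun d => Finset.univ.filter (fun c => c ≠ G.s ∧ t c = d)
  have hC : ∀ d c, c ∈ C d ↔ c ≠ G.s ∧ t c = d := by intro d c; simp [C]
  have reachC : ∀ (P : V → Prop) d z, G.Av P z → ∀ c ∈ C d, G.Dom c z →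
      Rc (fun c => G.A d c) (fun c => c ∈ C d ∧ P c)
        (fun a b => ∃ v, G.Dom a v ∧ G.A v b) c := by
    intro P d z hz
    induction hz with
    | base z hz hP =>
      intro c hc hcz
      rw [hz] at hcz
      exact absurd (G.dom_root hcz) ((hC d c).1 hc).1
    | step u z hu hA hP ih =>
      intro c hc hcz
      by_cases hcz' : c = z
      · subst hcz'
        obtain ⟨c1, c2⟩ := (hC d c).1 hc
        obtain ⟨a1, a2, a3, a4⟩ := ht c c1
        rw [c2] at a1 a2
        have hdu := G.dom_arc hA a1 a2
        by_cases hdu' : d = u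
        · subst hdu'
          exact .base c hA ⟨hc, hP⟩
        · obtain ⟨c', q1, q2, q3⟩ := child _ d u rfl hdu hdu'
          exact .step c' c (ih c' ((hC d c').2 ⟨q1, q2⟩) q3) ⟨u, q3, hA⟩ ⟨hc, hP⟩
      · exact ih c hc (G.dom_arc hA hcz hcz')
  have sib : ∀ x y, x ≠ G.s → y ≠ G.s → t x = t y → G.Dom x y → x = y := by
    intro x y hx hy hxy hd
    by_contra hne
    have := (ht y hy).2.2.1 x hd hne
    rw [← hxy] at this
    exact (ht x hx).2.1 (G.dom_antisymm (ht x hx).1 this)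
  have hflat : ∀ d, ∃ f : V → ℕ, (∀ x ∈ C d, ∀ y ∈ C d, f x = f y → x = y) ∧
      ∀ x ∈ C d, G.A d x ∨ ∃ u ∈ C d, ∃ w ∈ C d, (∃ v, G.Dom u v ∧ G.A v x) ∧
        (∃ v, G.Dom w v ∧ G.A v x) ∧ f u < f x ∧ f x < f w := by
    intro d
    refine flat_order _ (C d) rfl (fun c => G.A d c) (fun a b => ∃ v, G.Dom a v ∧ G.A v b) ?_ ?_
    · intro y hy
      exact (reachC (fun _ => True) d y (G.av_true y) y hy (G.dom_refl y)).mono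
        (fun _ h => h.1) (fun _ _ h => h)
    · intro x hx y hy hyx
      refine reachC (fun z => z ≠ x) d y (G.not_dom_iff.1 ?_) y hy (G.dom_refl y)
      intro hd
      obtain ⟨x1, x2⟩ := (hC d x).1 hx
      obtain ⟨y1, y2⟩ := (hC d y).1 hy
      exact hyx (sib x y x1 y1 (x2.trans y2.symm) hd).symm
  choose f finj hf using hflat
  obtain ⟨key, k0, k1⟩ := exists_key G.s t dep (fun v hv => (ht v hv).2.2.2) (fun v => f (t v) v)
  have kinj' : ∀ n x y, dep x = n → key x = key y → x = y := by
    intro n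
    induction n using Nat.strong_induction_on with
    | _ n ih =>
      intro x y hn hxy
      by_cases hx : x = G.s <;> by_cases hy : y = G.s
      · rw [hx, hy]
      · rw [hx, k0, k1 y hy] at hxy; simp at hxy
      · rw [hy, k0, k1 x hx] at hxy; simp at hxy
      · rw [k1 x hx, k1 y hy] at hxy
        obtain ⟨e1, e2⟩ := List.append_inj' hxy rfl
        have e3 := ih (dep (t x)) (hn ▸ (ht x hx).2.2.2) (t x) (t y) rfl e1
        simp only [List.cons.injEq, and_true] at e2
        rw [← e3] at e2
        exact finj (t x) x ((hC _ _).2 ⟨hx, rfl⟩) y ((hC _ _).2 ⟨hy, e3.symm⟩) e2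
  have kinj : ∀ x y, key x = key y → x = y := fun x y => kinj' _ x y rfl
  have kdom' : ∀ n x y, dep y = n → (G.Dom x y ↔ key x <+: key y) := by
    intro n
    induction n using Nat.strong_induction_on with
    | _ n ih =>
      intro x y hn
      by_cases hy : y = G.s
      · rw [hy, k0, List.prefix_nil]
        constructor
        · intro h; rw [G.dom_root h, k0]
        · intro h; rw [kinj x G.s (h.trans k0.symm)]; exact G.dom_refl _
      · obtain ⟨a1, a2, a3, a4⟩ := ht y hy
        have := ih (dep (t y)) (hn ▸ a4) x (t y) rfl
        constructor
        · intro h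
          by_cases hxy : x = y
          · rw [hxy]
          · rw [k1 y hy]
            exact (this.1 (a3 x h hxy)).trans (List.prefix_append _ _)
        · intro h
          rw [k1 y hy, List.prefix_concat_iff] at h
          rcases h with h | h
          · rw [kinj x y (h.trans (k1 y hy).symm)]; exact G.dom_refl _
          · exact G.dom_trans (this.2 h) a1
  have kdom : ∀ x y, G.Dom x y ↔ key x <+: key y := fun x y => kdom' _ x y rfl
  have hbr : ∀ v, ∃ b r, v ≠ G.s → (G.A b v ∧ key b < key v) ∧ (G.A r v ∧
        ((G.Dom r v ∧ r ≠ v) ∨ (key v < key r ∧ ¬ G.Dom v r))) := by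
    intro v
    by_cases hv : v = G.s
    · exact ⟨v, v, fun h => absurd hv h⟩
    obtain ⟨a1, a2, a3, a4⟩ := ht v hv
    rcases hf (t v) v ((hC _ _).2 ⟨hv, rfl⟩) with h | ⟨u, hu, w, hw, ⟨b, b1, b2⟩, ⟨r, r1, r2⟩, l1, l2⟩
    · refine ⟨t v, t v, fun _ => ⟨⟨h, ?_⟩, h, Or.inl ⟨a1, a2⟩⟩⟩
      exact lt_of_le_of_ne (prefix_le _ _ ((kdom _ _).1 a1)) (fun e => a2 (kinj _ _ e))
    · obtain ⟨u1, u2⟩ := (hC _ _).1 hu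
      obtain ⟨w1, w2⟩ := (hC _ _).1 hw
      refine ⟨b, r, fun _ => ⟨⟨b2, ?_⟩, r2, Or.inr ⟨?_, ?_⟩⟩⟩
      · obtain ⟨l, hl⟩ := (kdom _ _).1 b1
        rw [k1 u u1, u2] at hl
        rw [← hl, k1 v hv, List.append_assoc]
        exact lex_lt _ _ _ _ _ l1
      · obtain ⟨l, hl⟩ := (kdom _ _).1 r1
        rw [k1 w w1, w2] at hl
        rw [← hl, k1 v hv, List.append_assoc]
        exact lex_lt _ _ _ _ _ l2
      · intro hd
        rcases G.dom_chain hd r1 with h | h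
        · have := sib v w hv w1 w2.symm h
          rw [this] at l2; exact lt_irrefl _ l2
        · have := sib w v w1 hv w2 h
          rw [this] at l2; exact lt_irrefl _ l2
  choose b r hbr using hbr
  exact ⟨key, b, r, kinj, kdom, fun v hv => (hbr v hv).1, fun v hv => (hbr v hv).2⟩

theorem spanning_of_parent [Fintype V] (G : FlowGraph V) (b : V → V) (L : V → V → Prop)
    (hirr : ∀ x, ¬ L x x) (htr : ∀ x y z, L x y → L y z → L x z)
    (hb : ∀ v, v ≠ G.s → G.A (b v) v ∧ L (b v) v) :
    IsSpanningTree G (fun u v => v ≠ G.s ∧ u = b v) ∧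
    ∀ p v, IsWalk (fun u v => v ≠ G.s ∧ u = b v) G.s v p → ∀ x ∈ p, x = v ∨ L x v := by
  refine ⟨⟨?_, ?_, ?_, ?_⟩, ?_⟩
  · rintro u v ⟨h1, rfl⟩; exact (hb v h1).1
  · rintro v ⟨h, _⟩; exact h rfl
  · intro v hv; exact ⟨b v, ⟨hv, rfl⟩, fun y hy => hy.2⟩
  · have : IsTrans V L := ⟨htr⟩
    have : Std.Irrefl L := ⟨hirr⟩
    intro v
    induction v using (Finite.wellFounded_of_trans_of_irrefl L).induction with
    | _ v ih =>
      by_cases hv : v = G.s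
      · subst hv
        exact ⟨[G.s], List.isChain_singleton _, rfl, rfl⟩
      · obtain ⟨p, hp⟩ := ih (b v) (hb v hv).2
        exact ⟨p ++ [v], walk_snoc hp ⟨hv, rfl⟩⟩
  · refine walk_ind (fun v p => ∀ x ∈ p, x = v ∨ L x v) ?_ ?_
    · intro x hx; left; simpa using hx
    · rintro u v q _ ih ⟨hv, rfl⟩ x hx
      rw [List.mem_append, List.mem_singleton] at hx
      rcases hx with hx | hx
      · right
        rcases ih x hx with h | h
        · rw [h]; exact (hb v hv).2
        · exact htr _ _ _ h (hb v hv).2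
      · exact Or.inl hx

end FlowGraph

/-- Every flow graph has a pair of strongly independent spanning trees rooted
at `s`. -/
theorem stmt17 [Fintype V] (G : FlowGraph V) :
    ∃ B R : V → V → Prop,
      IsSpanningTree G B ∧ IsSpanningTree G R ∧
      StronglyIndependent G B R := by
  obtain ⟨key, b, r, kinj, kdom, hb, hr⟩ := G.exists_lowhigh
  have kle : ∀ x y, G.Dom x y → key x ≤ key y := fun x y h => prefix_le _ _ ((kdom x y).1 h)
  have kmid : ∀ x y z, G.Dom x z → key x ≤ key y → key y ≤ key z → G.Dom x y :=
    fun x y z h h1 h2 => (kdom x y).2 (prefix_mid _ _ _ ((kdom x z).1 h) h1 h2)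
  obtain ⟨sB, wB⟩ := G.spanning_of_parent b (fun x y => key x < key y)
    (fun x => lt_irrefl _) (fun _ _ _ => lt_trans) hb
  obtain ⟨sR, wR⟩ := G.spanning_of_parent r
    (fun x y => (G.Dom x y ∧ x ≠ y) ∨ (key y < key x ∧ ¬ G.Dom y x))
    (by
      rintro x (h | h)
      · exact h.2 rfl
      · exact lt_irrefl _ h.1)
    (by
      rintro x y z (⟨h1, h2⟩ | ⟨h1, h2⟩) (⟨h3, h4⟩ | ⟨h3, h4⟩)
      · left
        refine ⟨G.dom_trans h1 h3, ?_⟩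
        rintro rfl
        exact h2 (G.dom_antisymm h1 h3)
      · rcases lt_trichotomy (key x) (key z) with h | h | h
        · left
          refine ⟨kmid x z y h1 h.le h3.le, ?_⟩
          rintro rfl
          exact lt_irrefl _ h
        · rw [kinj _ _ h] at h1
          exact absurd h1 h4
        · right
          exact ⟨h, fun hd => h4 (G.dom_trans hd h1)⟩
      · right
        constructor
        · by_contra hlt
          exact h2 (kmid y x z h3 h1.le (not_lt.1 hlt))
        · exact fun hd => h2 (G.dom_trans h3 hd)
      · right
        exact ⟨h3.trans h1, fun hd => h4 (kmid z y x hd h3.le h1.le)⟩)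
    hr
  have main : ∀ v w, key v ≤ key w → ∀ p q : List V,
      IsWalk (fun u v => v ≠ G.s ∧ u = b v) G.s v p →
      IsWalk (fun u v => v ≠ G.s ∧ u = r v) G.s w q →
      ∀ x : V, x ∈ p → x ∈ q → G.Dom x v ∧ G.Dom x w := by
    intro v w hvw p q hp hq x hxp hxq
    have h1 : key x ≤ key v := by
      rcases wB p v hp x hxp with h | h
      · rw [h]
      · exact h.le
    have h2 : G.Dom x w := by
      rcases wR q w hq x hxq with h | h | h
      · rw [h]; exact G.dom_refl w
      · exact h.1
      · exact absurd h.1 (not_lt.2 (h1.trans hvw))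
    exact ⟨kmid x v w h2 h1 hvw, h2⟩
  refine ⟨_, _, sB, sR, ?_⟩
  intro v w
  rcases le_total (key v) (key w) with h | h
  · exact Or.inl (main v w h)
  · right
    intro p q hp hq x hx hx'
    exact (main w v h q p hq hp x hx' hx).symm
end

section
/- Let G be a flow graph with a depth-first spanning tree F (parent function f, vertices identified with their preorder numbers), and let T be a rooted tree on V with the parent property, with parent function t. For v ≠ s, let (f'(v), v) denote the derived arc of the arc (f(v), v) with respect to T. Then T has the sibling property (and hence is the dominator tree of G) if and only if for every vertex v ≠ s, either f(v) = t(v) or sd(v) < f'(v). -/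
variable {V : Type*}

theorem rtg_mono {R S : V → V → Prop} {x y : V} (h : ∀ a b, R a b → S a b)
    (hr : Relation.ReflTransGen R x y) : Relation.ReflTransGen S x y := by
  induction hr with
  | refl => exact .refl
  | tail _ hbc ih => exact ih.tail (h _ _ hbc)

theorem walk_rtg {A : V → V → Prop} {P : V → Prop} {v : V} (p : List V) :
    ∀ u : V, IsWalk A u v p → (∀ x ∈ p, P x) →
      P u ∧ Relation.ReflTransGen (fun x y => A x y ∧ P y) u v := by
  induction p with
  | nil => intro u h _; simp [IsWalk] at h
  | cons a l ih =>
    intro u h hP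
    obtain ⟨h1, h2, h3⟩ := h
    have hau : a = u := by simpa using h2
    subst hau
    refine ⟨hP a (by simp), ?_⟩
    cases l with
    | nil =>
      have : a = v := by simpa using h3
      subst this
      exact Relation.ReflTransGen.refl
    | cons b l =>
      have h1' : A a b ∧ List.IsChain A (b :: l) := by
        have h1'' : List.IsChain A (a :: b :: l) := h1
        simpa using h1''
      have := ih b ⟨h1'.2, by simp, by simpa using h3⟩ (fun x hx => hP x (by simp [hx]))
      exact Relation.ReflTransGen.head ⟨h1'.1, this.1⟩ this.2

theorem rtg_walk {A : V → V → Prop} {P : V → Prop} {u v : V}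
    (h : Relation.ReflTransGen (fun x y => A x y ∧ P y) u v) :
    P u → ∃ p : List V, IsWalk A u v p ∧ ∀ x ∈ p, P x := by
  induction h using Relation.ReflTransGen.head_induction_on with
  | refl => intro hu; exact ⟨[v], ⟨List.isChain_singleton v, by simp, by simp⟩, by simpa using hu⟩
  | head hab hbc ih =>
    intro hu
    obtain ⟨p, ⟨h1, h2, h3⟩, hp⟩ := ih hab.2
    cases p with
    | nil => simp at h2
    | cons b l =>
      rename_i a c
      have hb : b = c := by simpa using h2
      subst hb
      refine ⟨a :: b :: l, ⟨?_, by simp, by simpa using h3⟩, ?_⟩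
      · have h1' : List.IsChain A (b :: l) := h1
        have : List.IsChain A (a :: b :: l) := by simpa using ⟨hab.1, h1'⟩
        exact this
      · intro x hx
        rcases List.mem_cons.1 hx with rfl | hx
        · exact hu
        · exact hp x hx

theorem dom_iff {A : V → V → Prop} {s x w : V} :
    DomOn A s x w ↔
      ¬ (s ≠ x ∧ Relation.ReflTransGen (fun a b => A a b ∧ b ≠ x) s w) := by
  constructor
  · rintro h ⟨h1, h2⟩
    obtain ⟨p, hp, hx⟩ := rtg_walk (P := fun b => b ≠ x) h2 h1
    exact hx x (h p hp) rfl
  · intro h p hp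
    by_contra hx
    exact h (walk_rtg (P := fun b => b ≠ x) p s hp (fun y hy e => hx (e ▸ hy)))

theorem anc_refl (T : ParentTree V) (x : V) : T.Anc x x := ⟨0, rfl⟩

theorem anc_trans {T : ParentTree V} {x y z : V} (h : T.Anc x y) (h' : T.Anc y z) :
    T.Anc x z := by
  obtain ⟨m, rfl⟩ := h
  obtain ⟨n, rfl⟩ := h'
  exact ⟨m + n, Function.iterate_add_apply _ _ _ _⟩

theorem anc_parent (T : ParentTree V) (x : V) : T.Anc (T.parent x) x := ⟨1, rfl⟩

theorem anc_of_ne {T : ParentTree V} {x y : V} (h : T.Anc x y) (hne : x ≠ y) :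
    T.Anc x (T.parent y) := by
  obtain ⟨n, hn⟩ := h
  cases n with
  | zero => exact absurd hn.symm hne
  | succ n => exact ⟨n, by simpa using hn⟩

theorem anc_root {T : ParentTree V} {x : V} (h : T.Anc x T.root) : x = T.root := by
  obtain ⟨n, hn⟩ := h
  rw [Function.iterate_fixed T.parent_root] at hn
  exact hn.symm

theorem eq_root {T : ParentTree V} {x : V} (h : T.parent x = x) : x = T.root := by
  obtain ⟨n, hn⟩ := T.reaches_root x
  rwa [Function.iterate_fixed h] at hn

theorem tree_dom {G : FlowGraph V} {T : ParentTree V} (hTroot : T.root = G.s)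
    (hpp : ParentProperty G T) {x w : V} (h : T.Anc x w) : DomOn G.A G.s x w := by
  rw [dom_iff]
  rintro ⟨hs, hr⟩
  have key : ¬ T.Anc x w := by
    clear h
    induction hr with
    | refl => intro h; rw [← hTroot] at h hs; exact hs (anc_root h).symm
    | tail _ hbc ih =>
      intro h
      exact ih (anc_trans (anc_of_ne h (Ne.symm hbc.2)) (hpp _ _ hbc.1))
  exact key h

theorem f_path {G : FlowGraph V} {F : ParentTree V} (hFroot : F.root = G.s)
    (hFsub : ∀ v : V, v ≠ G.s → G.A (F.parent v) v) {x : V} (n : ℕ) :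
    ∀ y : V, F.parent^[n] y = x →
      Relation.ReflTransGen (fun a b => G.A a b ∧ (F.Anc x b ∧ F.Anc b y)) x y := by
  induction n with
  | zero => intro y h; have : y = x := h; subst this; exact Relation.ReflTransGen.refl
  | succ n ih =>
    intro y h
    have h' : F.parent^[n] (F.parent y) = x := by simpa using h
    have h2 : Relation.ReflTransGen
        (fun a b => G.A a b ∧ (F.Anc x b ∧ F.Anc b y)) x (F.parent y) :=
      rtg_mono
        (fun a b hab => ⟨hab.1, hab.2.1, anc_trans hab.2.2 (anc_parent F y)⟩) (ih _ h')
    by_cases hy : y = G.s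
    · have : F.parent y = y := by rw [hy, ← hFroot]; exact F.parent_root
      rwa [this] at h2
    · exact h2.tail ⟨hFsub y hy, ⟨n + 1, h⟩, anc_refl F y⟩

theorem dom_anc {G : FlowGraph V} {F : ParentTree V} (hFroot : F.root = G.s)
    (hFsub : ∀ v : V, v ≠ G.s → G.A (F.parent v) v) {x w : V}
    (h : DomOn G.A G.s x w) : F.Anc x w := by
  obtain ⟨n, hn⟩ := F.reaches_root w
  rw [hFroot] at hn
  have hp := f_path hFroot hFsub n w hn
  obtain ⟨p, hp, hx⟩ := rtg_walk (P := fun b => F.Anc G.s b ∧ F.Anc b w) hp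
    ⟨anc_refl F _, n, hn⟩
  exact (hx x (h p hp)).2

theorem last_low {A : V → V → Prop} {P : V → Prop} (ν : V → ℕ) (k : ℕ) {s y : V}
    (h : Relation.ReflTransGen (fun a b => A a b ∧ P b) s y) (hs : ν s < k) :
    ∃ u, Relation.ReflTransGen (fun a b => A a b ∧ P b) s u ∧ ν u < k ∧
      Relation.ReflTransGen (fun a b => A a b ∧ k ≤ ν b) u y := by
  induction h with
  | refl => exact ⟨s, .refl, hs, .refl⟩
  | tail hab hbc ih =>
    rename_i b c
    by_cases hc : ν c < k
    · exact ⟨c, hab.tail hbc, hc, .refl⟩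
    · obtain ⟨u, h1, h2, h3⟩ := ih
      exact ⟨u, h1, h2, h3.tail ⟨hbc.1, not_lt.1 hc⟩⟩

/-- Let `F` be a depth-first spanning tree of `G` with vertices identified with
their preorder numbers (numbering `ν`), and let `T` be a tree with the parent
property, `(f'(v), v)` being the derived arc of `(f(v), v)` with respect to
`T`. Then `T` has the sibling property (and hence is the dominator tree of
`G`) if and only if for every `v ≠ s`, either `f(v) = t(v)` or
`sd(v) < f'(v)`. -/
theorem stmt18 [Fintype V] (G : FlowGraph V) (F : ParentTree V)
    (hFroot : F.root = G.s)
    (ν : V → ℕ) (hν : IsTreePreorder F ν)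
    (hFsub : ∀ v : V, v ≠ G.s → G.A (F.parent v) v)
    (hdfs : ∀ v w : V, G.A v w → F.Anc v w ∨ ν w < ν v)
    (sd : V → V)
    (hsd : ∀ v : V, v ≠ G.s →
      (∃ p : List V, IsHighWalk G.A ν (sd v) v p) ∧
      ∀ u : V, (∃ p : List V, IsHighWalk G.A ν u v p) → ν (sd v) ≤ ν u)
    (T : ParentTree V) (hTroot : T.root = G.s) (hpp : ParentProperty G T)
    (f' : V → V)
    (hf' : ∀ v : V, v ≠ G.s → IsDerivedArcOf G T (F.parent v) v (f' v)) :
    SiblingProperty G T ↔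
      ∀ v : V, v ≠ G.s → F.parent v = T.parent v ∨ ν (sd v) < ν (f' v) := by
  obtain ⟨hinj, hmono, hint⟩ := hν
  have hrootanc : ∀ v, F.Anc G.s v := fun v => by
    rw [← hFroot]; exact F.reaches_root v
  have hTF : ∀ {x w}, T.Anc x w → F.Anc x w := fun h =>
    dom_anc hFroot hFsub (tree_dom hTroot hpp h)
  constructor
  · intro hsib v hv
    obtain ⟨hA, hnanc, hcase⟩ := hf' v hv
    rcases hcase with ⟨h, _⟩ | ⟨_, hroot, hpar, hanc⟩
    · exact Or.inl h
    right
    set a := f' v with ha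
    have hav : a ≠ v := by rintro h; rw [h] at hanc; exact hnanc hanc
    have hnd := hsib a v hroot (by rwa [hTroot]) hav hpar
    have hdomf : DomOn G.A G.s a (F.parent v) := tree_dom hTroot hpp hanc
    change ¬ DomOn G.A G.s a v at hnd
    rw [dom_iff, not_not] at hnd
    obtain ⟨hsa, hr⟩ := hnd
    have hsv : ν G.s < ν v := lt_of_le_of_ne (hmono _ _ (hrootanc v))
      (fun h => hv (hinj h).symm)
    obtain ⟨u, hu1, hu2, hu3⟩ := last_low ν (ν v) hr hsv
    have huv : u ≠ v := by rintro rfl; exact lt_irrefl _ hu2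
    have huanc : F.Anc u v := by
      rcases Relation.ReflTransGen.cases_head hu3 with h | ⟨z, hz, _⟩
      · exact absurd h huv
      · rcases hdfs u z hz.1 with h | h
        · exact hint u u v z (anc_refl F u) h hu2.le hz.2
        · exact absurd (h.trans hu2) (not_lt.2 hz.2)
    have huf : F.Anc u (F.parent v) := anc_of_ne huanc huv
    have hua : ν u < ν a := by
      by_contra hlt
      rw [not_lt] at hlt
      have hne : u ≠ a := by
        rintro rfl
        rcases Relation.ReflTransGen.cases_tail hu1 with h | ⟨z, _, hz⟩
        · exact hsa h.symm
        · exact hz.2 rfl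
      obtain ⟨n, hn⟩ := huf
      have hp := f_path hFroot hFsub n _ hn
      refine (dom_iff.1 hdomf) ⟨hsa, hu1.trans (rtg_mono ?_ hp)⟩
      rintro b c ⟨h1, h2, _⟩
      refine ⟨h1, ?_⟩
      rintro rfl
      exact hne (hinj (le_antisymm (hmono _ _ h2) hlt))
    refine lt_of_le_of_lt ((hsd v hv).2 u ?_) hua
    obtain ⟨p, hp, hx⟩ := rtg_walk (P := fun x => x = u ∨ ν v ≤ ν x)
      (rtg_mono (fun b c h => ⟨h.1, Or.inr h.2⟩) hu3) (Or.inl rfl)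
    refine ⟨p, hp, fun x hxp hxu hxv => ?_⟩
    have h1 := (hx x hxp).resolve_left hxu
    have h2 : ν v < ν x := lt_of_le_of_ne h1 (fun h => hxv (hinj h).symm)
    exact ⟨hu2.trans h2, h2⟩
  · intro hcond
    suffices H : ∀ k : ℕ, ∀ v w : V, ν w = k → v ≠ T.root → w ≠ T.root → v ≠ w →
        T.parent v = T.parent w → ¬ DomOn G.A G.s v w from
      fun v w => H _ v w rfl
    intro k
    induction k using Nat.strong_induction_on with
    | _ k ih =>
    intro v w hk hv hw hvw hpar hdom
    have hws : w ≠ G.s := by rwa [hTroot] at hw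
    have hvs : G.s ≠ v := by rw [hTroot] at hv; exact hv.symm
    have hvFw : F.Anc v w := dom_anc hFroot hFsub hdom
    have hvlt : ν v < ν w := lt_of_le_of_ne (hmono _ _ hvFw) (fun h => hvw (hinj h))
    have hne : F.parent w ≠ T.parent w := by
      intro h
      have h1 := anc_of_ne hvFw hvw
      rw [h, ← hpar] at h1
      have h2 := hTF (anc_parent T v)
      exact hv (eq_root (hinj (le_antisymm (hmono _ _ h2) (hmono _ _ h1))))
    have hlt := (hcond w hws).resolve_left hne
    obtain ⟨hA, hnanc, hcase⟩ := hf' w hws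
    rcases hcase with ⟨h, _⟩ | ⟨_, hroot, hpara, hanc⟩
    · exact hne h
    set a := f' w with ha
    have haw : a ≠ w := by rintro h; rw [h] at hanc; exact hnanc hanc
    have haFw : F.Anc a w := anc_trans (hTF hanc) (anc_parent F w)
    have halt : ν a < ν w := lt_of_le_of_ne (hmono _ _ haFw) (fun h => haw (hinj h))
    have hvsd : ν v ≤ ν (sd w) := by
      by_contra hc
      rw [not_le] at hc
      obtain ⟨n, hn⟩ := hrootanc (sd w)
      have hp := f_path hFroot hFsub n _ hn
      obtain ⟨q, hq, hhigh⟩ := (hsd w hws).1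
      have hq2 := (walk_rtg (P := fun x => x ≠ v) q _ hq (by
        rintro x hxq rfl
        have := (hhigh x hxq (by rintro h; rw [← h] at hc; exact lt_irrefl _ hc) hvw).2
        omega)).2
      refine dom_iff.1 hdom ⟨hvs, Relation.ReflTransGen.trans
        (rtg_mono ?_ hp) hq2⟩
      rintro b c ⟨h1, _, h2⟩
      refine ⟨h1, ?_⟩
      rintro rfl
      have := hmono _ _ h2
      omega
    have hva : ν v < ν a := lt_of_le_of_lt hvsd hlt
    refine ih (ν a) (hk ▸ halt) v a rfl hv hroot (fun h => by rw [h] at hva; exact lt_irrefl _ hva)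
      (hpar.trans hpara.symm) ?_
    rw [dom_iff]
    rintro ⟨_, hr⟩
    obtain ⟨n, hn⟩ := haFw
    have hp := f_path hFroot hFsub n _ hn
    refine dom_iff.1 hdom ⟨hvs, hr.trans (rtg_mono ?_ hp)⟩
    rintro b c ⟨h1, h2, _⟩
    refine ⟨h1, ?_⟩
    rintro rfl
    have := hmono _ _ h2
    omega
end
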